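/- The number of simultaneous conjugacy classes of pairs of commuting elements of SL_2(F_q), for q odd, equals q^2 + 8q + 9; more generally c_s(2,1,q) = q+4 and c_s(2,2,q) = q^2 + 8q + 9. -/

import Mathlib

/-- The number of orbits of a group `G` acting by simultaneous conjugation on the set
of `m`-tuples of pairwise commuting elements of `G`. -/
noncomputable def commClassCount (G : Type*) [Group G] (m : ℕ) : ℕ :=
  Nat.card (Quot (fun v w : {v : Fin m → G // ∀ i j, Commute (v i) (v j)} =>
    ∃ g : G, ∀ i, g * v.1 i * g⁻¹ = w.1 i))

section Burnside

variable {G : Type*} [Group G]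

/-- Simultaneous conjugation of `m`-tuples of pairwise commuting elements. -/
abbrev commTupleConj (G : Type*) [Group G] (m : ℕ) :
    MulAction G {v : Fin m → G // ∀ i j, Commute (v i) (v j)} where
  smul g v := ⟨fun i => g * v.1 i * g⁻¹, fun i j => (Commute.conj_iff g).2 (v.2 i j)⟩
  one_smul v := Subtype.ext (funext fun i => by change 1 * v.1 i * 1⁻¹ = v.1 i; simp)
  mul_smul g h v := Subtype.ext (funext fun i => by
    change g * h * v.1 i * (g * h)⁻¹ = g * (h * v.1 i * h⁻¹) * g⁻¹
    group)

theorem commClassCount_mul_card [Fintype G] (m : ℕ) :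
    commClassCount G m * Nat.card G = ∑ g : G,
      Nat.card {v : Fin m → G // (∀ i j, Commute (v i) (v j)) ∧ ∀ i, Commute g (v i)} := by
  classical
  let := commTupleConj G m
  let (g : G) : Fintype (MulAction.fixedBy {v : Fin m → G // ∀ i j, Commute (v i) (v j)} g) :=
    Fintype.ofFinite _
  let : Fintype (Quotient (MulAction.orbitRel G
      {v : Fin m → G // ∀ i j, Commute (v i) (v j)})) := Fintype.ofFinite _
  have key := MulAction.sum_card_fixedBy_eq_card_orbits_mul_card_group G
    {v : Fin m → G // ∀ i j, Commute (v i) (v j)}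
  have hq : commClassCount G m = Fintype.card (Quotient (MulAction.orbitRel G
      {v : Fin m → G // ∀ i j, Commute (v i) (v j)})) := by
    rw [← Nat.card_eq_fintype_card]
    refine Nat.card_congr (Quot.congrRight fun v w => ?_)
    refine Iff.trans ?_ (MulAction.orbitRel G _).comm'
    refine exists_congr fun g => ?_
    rw [Subtype.ext_iff, funext_iff]
    rfl
  rw [hq, Nat.card_eq_fintype_card (α := G), ← key]
  refine Finset.sum_congr rfl fun g _ => ?_
  rw [← Nat.card_eq_fintype_card]
  refine Nat.card_congr ((Equiv.subtypeEquivRight fun v => ?_).trans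
    (Equiv.subtypeSubtypeEquivSubtypeInter _ fun v : Fin m → G => ∀ i, Commute g (v i)))
  rw [MulAction.mem_fixedBy, Subtype.ext_iff, funext_iff]
  exact forall_congr' fun i => mul_inv_eq_iff_eq_mul

theorem card_commTuples_centralizing {m : ℕ} (g : G)
    (h : ∀ v : Fin m → G, (∀ i, Commute g (v i)) → ∀ i j, Commute (v i) (v j)) :
    Nat.card {v : Fin m → G // (∀ i j, Commute (v i) (v j)) ∧ ∀ i, Commute g (v i)} =
      Nat.card {x // Commute g x} ^ m := by
  rw [Nat.card_congr ((Equiv.subtypeEquivRight fun v => and_iff_right_of_imp (h v)).trans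
    (Equiv.subtypePiEquivPi (p := fun _ x => Commute g x))), Nat.card_fun, Nat.card_fin]

theorem card_commPairs [Fintype G] :
    Nat.card {v : Fin 2 → G // ∀ i j, Commute (v i) (v j)} =
      ∑ x : G, Nat.card {y // Commute x y} := by
  rw [← Nat.card_sigma]
  exact Nat.card_congr
    { toFun v := ⟨v.1 0, v.1 1, v.2 0 1⟩
      invFun p := ⟨![p.1, p.2.1], by
        have := p.2.2
        simp [Fin.forall_fin_two, this, this.symm]⟩
      left_inv v := Subtype.ext (by ext i; fin_cases i <;> rfl)
      right_inv _ := rfl }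

theorem commClassCount_one_mul_card [Fintype G] :
    commClassCount G 1 * Nat.card G = ∑ g : G, Nat.card {x // Commute g x} := by
  rw [commClassCount_mul_card]
  refine Finset.sum_congr rfl fun g _ => ?_
  rw [card_commTuples_centralizing, pow_one]
  intro v _ i j
  rw [Subsingleton.elim i j]

theorem commClassCount_two_mul_card [Fintype G]
    (h : ∀ g x y : G, g ∉ Subgroup.center G → Commute g x → Commute g y → Commute x y) :
    (commClassCount G 2 * Nat.card G : ℤ) = ∑ g : G, (Nat.card {x // Commute g x} : ℤ) ^ 2 +
      Nat.card (Subgroup.center G) *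
        (commClassCount G 1 * Nat.card G - (Nat.card G : ℤ) ^ 2) := by
  classical
  have hterm (g : G) :
      (Nat.card {v : Fin 2 → G // (∀ i j, Commute (v i) (v j)) ∧ ∀ i, Commute g (v i)} : ℤ) =
      (Nat.card {x // Commute g x} : ℤ) ^ 2 + if g ∈ Subgroup.center G then
        (commClassCount G 1 * Nat.card G - (Nat.card G : ℤ) ^ 2) else 0 := by
    split_ifs with hg
    · have hc (x : G) : Commute g x := (Subgroup.mem_center_iff.1 hg x).symm
      have h1 : Nat.card {x // Commute g x} = Nat.card G :=
        Nat.card_congr (Equiv.subtypeUnivEquiv hc)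
      have h2 : Nat.card {v : Fin 2 → G // (∀ i j, Commute (v i) (v j)) ∧ ∀ i, Commute g (v i)} =
          commClassCount G 1 * Nat.card G := by
        rw [commClassCount_one_mul_card, ← card_commPairs]
        exact Nat.card_congr (Equiv.subtypeEquivRight fun v => and_iff_left fun i => hc _)
      rw [h1, h2]
      push_cast
      ring
    · rw [card_commTuples_centralizing g fun v hv i j => h g _ _ hg (hv i) (hv j)]
      push_cast
      ring
  have := commClassCount_mul_card (G := G) 2
  zify at this
  rw [this, Finset.sum_congr rfl fun g _ => hterm g, Finset.sum_add_distrib, Finset.sum_ite]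
  simp only [Finset.sum_const, nsmul_eq_mul, mul_zero, add_zero]
  rw [← Fintype.card_subtype, ← Nat.card_eq_fintype_card]

end Burnside

section CharacterSums

variable {F : Type*} [Field F] [Fintype F] [DecidableEq F]

theorem card_filter_sq_eq (hF : ringChar F ≠ 2) (a : F) :
    (({x | x ^ 2 = a} : Finset F).card : ℤ) = quadraticChar F a + 1 := by
  rw [← quadraticChar_card_sqrts hF a]
  congr 2
  ext
  simp

theorem sum_comp_sq (hF : ringChar F ≠ 2) (f : F → ℤ) :
    ∑ x : F, f (x ^ 2) = ∑ y : F, (quadraticChar F y + 1) * f y := by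
  rw [← Finset.sum_fiberwise' Finset.univ (fun x : F => x ^ 2) f]
  refine Finset.sum_congr rfl fun y _ => ?_
  rw [Finset.sum_const, nsmul_eq_mul, card_filter_sq_eq hF]

theorem sum_quadraticChar_affine (hF : ringChar F ≠ 2) {a : F} (ha : a ≠ 0) (c : F) :
    ∑ x : F, quadraticChar F (a * x + c) = 0 := by
  rw [← quadraticChar_sum_zero hF]
  exact ((Equiv.mulLeft₀ a ha).trans (Equiv.addRight c)).sum_comp fun x => quadraticChar F x

theorem sum_quadraticChar_mul_sq_add (hF : ringChar F ≠ 2) (a : F) {c : F} (hc : c ≠ 0) :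
    ∑ x : F, quadraticChar F (a * x ^ 2 + c) =
      -quadraticChar F a + if a = 0 then Fintype.card F * quadraticChar F c else 0 := by
  split_ifs with ha
  · simp [ha]
  rw [sum_comp_sq hF fun y => quadraticChar F (a * y + c)]
  simp only [add_mul, one_mul, Finset.sum_add_distrib, sum_quadraticChar_affine hF ha]
  have h1 : ∑ x : F, quadraticChar F x * quadraticChar F (a * x + c) =
      ∑ x : F, if x = 0 then 0 else quadraticChar F (c * x + a) := by
    rw [← Equiv.sum_comp (Equiv.inv F)]
    refine Finset.sum_congr rfl fun x _ => ?_
    split_ifs with hx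
    · simp [hx]
    · have : c * x + a = (x⁻¹ * (a * x⁻¹ + c)) * x ^ 2 := by field_simp; ring
      rw [this, map_mul, map_mul, quadraticChar_sq_one' hx, mul_one]
      rfl
  have h2 := sum_quadraticChar_affine hF hc a
  rw [← Finset.sum_erase_add _ _ (Finset.mem_univ (0 : F)), mul_zero, zero_add] at h2
  have h3 : ∑ x : F, (if x = 0 then 0 else quadraticChar F (c * x + a)) =
      ∑ x ∈ Finset.univ.erase 0, quadraticChar F (c * x + a) := by
    rw [← Finset.sum_erase_add _ _ (Finset.mem_univ (0 : F)), if_pos rfl, add_zero]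
    exact Finset.sum_congr rfl fun x hx => if_neg (Finset.ne_of_mem_erase hx)
  rw [h1, h3]
  linarith

theorem card_filter_monic_quadratic (hF : ringChar F ≠ 2) (t c : F) :
    (({x | x ^ 2 - t * x + c = 0} : Finset F).card : ℤ) =
      quadraticChar F (t ^ 2 - 4 * c) + 1 := by
  have h2 : (2 : F) ≠ 0 := Ring.two_ne_zero hF
  have h4 : (4 : F) ≠ 0 := by
    rw [show (4 : F) = 2 * 2 by norm_num]; exact mul_ne_zero h2 h2
  rw [← card_filter_sq_eq hF]
  congr 1
  refine Finset.card_equiv ((Equiv.mulLeft₀ 2 h2).trans (Equiv.subRight t)) fun x => ?_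
  simp only [Finset.mem_filter_univ, Equiv.trans_apply, Equiv.subRight_apply,
    Equiv.mulLeft₀_apply]
  rw [← mul_eq_zero_iff_left h4, ← sub_eq_zero (a := (2 * x - t) ^ 2)]
  ring_nf

/-- The conic `x ^ 2 + t * x * y + y ^ 2 = 1`. -/
theorem card_conic (hF : ringChar F ≠ 2) (t : F) :
    (Nat.card {p : F × F // p.1 ^ 2 + t * p.1 * p.2 + p.2 ^ 2 = 1} : ℤ) =
      Fintype.card F - quadraticChar F (t ^ 2 - 4) +
        if t ^ 2 - 4 = 0 then (Fintype.card F : ℤ) else 0 := by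
  have h2 : (2 : F) ≠ 0 := Ring.two_ne_zero hF
  have h4 : (4 : F) ≠ 0 := by
    rw [show (4 : F) = 2 * 2 by norm_num]; exact mul_ne_zero h2 h2
  have e : {p : F × F // p.1 ^ 2 + t * p.1 * p.2 + p.2 ^ 2 = 1} ≃
      Σ y : F, {x : F // x ^ 2 - (-t * y) * x + (y ^ 2 - 1) = 0} :=
    { toFun p := ⟨p.1.2, p.1.1, by linear_combination p.2⟩
      invFun p := ⟨(p.2.1, p.1), by linear_combination p.2.2⟩
      left_inv _ := rfl
      right_inv _ := rfl }
  have hχ : quadraticChar F 4 = 1 := by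
    rw [show (4 : F) = 2 ^ 2 by norm_num]; exact quadraticChar_sq_one' h2
  have hy (y : F) : (-t * y) ^ 2 - 4 * (y ^ 2 - 1) = (t ^ 2 - 4) * y ^ 2 + 4 := by ring
  rw [Nat.card_congr e, Nat.card_sigma]
  simp only [Nat.card_eq_fintype_card, Fintype.card_subtype, Nat.cast_sum,
    card_filter_monic_quadratic hF, hy]
  rw [Finset.sum_add_distrib, sum_quadraticChar_mul_sq_add hF _ h4, hχ]
  simp
  ring

end CharacterSums

section SpecialLinear

variable {F : Type*} [Field F]

theorem exists_eq_smul_one_add_smul_of_commute {A B : Matrix (Fin 2) (Fin 2) F}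
    (hA : ∀ r : F, Matrix.scalar (Fin 2) r ≠ A) (h : Commute A B) :
    ∃ x y : F, B = x • (1 : Matrix (Fin 2) (Fin 2) F) + y • A := by
  have h' : A * B = B * A := h
  have h00 := congrFun (congrFun h' 0) 0
  have h01 := congrFun (congrFun h' 0) 1
  have h10 := congrFun (congrFun h' 1) 0
  simp only [Matrix.mul_apply, Fin.sum_univ_two] at h00 h01 h10
  by_cases hb : A 0 1 = 0
  · by_cases hc : A 1 0 = 0
    · have hd : A 0 0 - A 1 1 ≠ 0 := by
        intro hd
        refine hA (A 0 0) ?_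
        ext i j
        fin_cases i <;> fin_cases j <;> simp [hb, hc, sub_eq_zero.1 hd]
      refine ⟨B 0 0 - (B 0 0 - B 1 1) / (A 0 0 - A 1 1) * A 0 0,
        (B 0 0 - B 1 1) / (A 0 0 - A 1 1), ?_⟩
      have e01 : B 0 1 = 0 := by
        refine (mul_eq_zero.1 (?_ : (A 0 0 - A 1 1) * B 0 1 = 0)).resolve_left hd
        linear_combination h01 + (B 0 0 - B 1 1) * hb
      have e10 : B 1 0 = 0 := by
        refine (mul_eq_zero.1 (?_ : (A 0 0 - A 1 1) * B 1 0 = 0)).resolve_left hd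
        linear_combination -h10 + (B 0 0 - B 1 1) * hc
      ext i j
      fin_cases i <;> fin_cases j <;> simp [hb, hc, e01, e10]
      field_simp
      ring
    · refine ⟨B 0 0 - B 1 0 / A 1 0 * A 0 0, B 1 0 / A 1 0, ?_⟩
      ext i j
      fin_cases i <;> fin_cases j <;> simp <;> field_simp
      · linear_combination -h00
      · linear_combination -h10
  · refine ⟨B 0 0 - B 0 1 / A 0 1 * A 0 0, B 0 1 / A 0 1, ?_⟩
    ext i j
    fin_cases i <;> fin_cases j <;> simp <;> field_simp
    · linear_combination h00
    · linear_combination h01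

theorem scalar_ne_of_notMem_center {g : Matrix.SpecialLinearGroup (Fin 2) F}
    (hg : g ∉ Subgroup.center (Matrix.SpecialLinearGroup (Fin 2) F)) (r : F) :
    Matrix.scalar (Fin 2) r ≠ (g : Matrix (Fin 2) (Fin 2) F) := by
  intro h
  refine hg (Matrix.SpecialLinearGroup.mem_center_iff.2 ⟨r, ?_, h⟩)
  have := g.2
  rw [← h] at this
  simpa using this

theorem commute_iff_commute_coe {g h : Matrix.SpecialLinearGroup (Fin 2) F} :
    Commute g h ↔ Commute (g : Matrix (Fin 2) (Fin 2) F) (h : Matrix (Fin 2) (Fin 2) F) :=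
  Subtype.ext_iff

theorem commute_of_commute_notMem_center {g x y : Matrix.SpecialLinearGroup (Fin 2) F}
    (hg : g ∉ Subgroup.center (Matrix.SpecialLinearGroup (Fin 2) F))
    (hx : Commute g x) (hy : Commute g y) : Commute x y := by
  rw [commute_iff_commute_coe] at *
  obtain ⟨a, b, hab⟩ := exists_eq_smul_one_add_smul_of_commute (scalar_ne_of_notMem_center hg) hx
  rw [hab]
  exact ((Commute.one_left _).smul_left a).add_left (hy.smul_left b)

theorem det_smul_one_add_smul (A : Matrix (Fin 2) (Fin 2) F) (x y : F) :
    (x • (1 : Matrix (Fin 2) (Fin 2) F) + y • A).det =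
      x ^ 2 + A.trace * x * y + A.det * y ^ 2 := by
  simp [Matrix.det_fin_two, Matrix.trace_fin_two]
  ring

theorem card_centralizer_eq_card_conic {g : Matrix.SpecialLinearGroup (Fin 2) F}
    (hg : g ∉ Subgroup.center (Matrix.SpecialLinearGroup (Fin 2) F)) :
    Nat.card {h // Commute g h} =
      Nat.card {p : F × F // p.1 ^ 2 + g.1.trace * p.1 * p.2 + p.2 ^ 2 = 1} := by
  have hs := scalar_ne_of_notMem_center hg
  let f (p : {p : F × F // p.1 ^ 2 + g.1.trace * p.1 * p.2 + p.2 ^ 2 = 1}) :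
      {h // Commute g h} :=
    ⟨⟨p.1.1 • 1 + p.1.2 • g.1, by rw [det_smul_one_add_smul, g.2, one_mul, p.2]⟩,
      commute_iff_commute_coe.2
        (((Commute.one_right _).smul_right _).add_right ((Commute.refl _).smul_right _))⟩
  refine (Nat.card_congr (Equiv.ofBijective f ⟨fun p p' h => ?_, fun h => ?_⟩)).symm
  · have h' : p.1.1 • 1 + p.1.2 • g.1 = p'.1.1 • 1 + p'.1.2 • g.1 :=
      congrArg (fun z => z.1.1) h
    have hy : p.1.2 = p'.1.2 := by
      by_contra hne
      have hne' := sub_ne_zero.2 hne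
      refine hs ((p'.1.1 - p.1.1) / (p.1.2 - p'.1.2)) ?_
      ext i j
      have := congrFun (congrFun h' i) j
      fin_cases i <;> fin_cases j <;> simp at this ⊢ <;> grind
    have hx : p.1.1 = p'.1.1 := by
      simpa [hy] using congrFun (congrFun h' 0) 0
    exact Subtype.ext (Prod.ext hx hy)
  · obtain ⟨x, y, hxy⟩ := exists_eq_smul_one_add_smul_of_commute hs
      (commute_iff_commute_coe.1 h.2)
    refine ⟨⟨(x, y), ?_⟩, Subtype.ext (Subtype.ext hxy.symm)⟩
    have := det_smul_one_add_smul g.1 x y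
    rw [← hxy, h.1.2, g.2, one_mul] at this
    exact this.symm

theorem trace_sq_sub_four_of_mem_center {g : Matrix.SpecialLinearGroup (Fin 2) F}
    (hg : g ∈ Subgroup.center (Matrix.SpecialLinearGroup (Fin 2) F)) : g.1.trace ^ 2 - 4 = 0 := by
  obtain ⟨r, hr, h⟩ := Matrix.SpecialLinearGroup.mem_center_iff.1 hg
  rw [← h]
  rw [Fintype.card_fin] at hr
  simp only [Matrix.trace_fin_two, Matrix.scalar_apply, Matrix.diagonal_apply_eq]
  linear_combination 4 * hr

variable [Fintype F] [DecidableEq F]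

theorem card_trace_eq (hF : ringChar F ≠ 2) (t : F) :
    (Nat.card {g : Matrix.SpecialLinearGroup (Fin 2) F // g.1.trace = t} : ℤ) =
      Fintype.card F * (Fintype.card F + quadraticChar F (t ^ 2 - 4)) := by
  have h2 : (2 : F) ≠ 0 := Ring.two_ne_zero hF
  have h4 : (4 : F) ≠ 0 := by
    rw [show (4 : F) = 2 * 2 by norm_num]; exact mul_ne_zero h2 h2
  have e : {g : Matrix.SpecialLinearGroup (Fin 2) F // g.1.trace = t} ≃
      Σ p : F × F, {x : F // x ^ 2 - t * x + (1 + p.1 * p.2) = 0} :=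
    { toFun g := ⟨(g.1.1 0 1, g.1.1 1 0), g.1.1 0 0, by
        have h1 := g.1.2
        have h2 := g.2
        rw [Matrix.det_fin_two] at h1
        rw [Matrix.trace_fin_two] at h2
        linear_combination g.1.1 0 0 * h2 - h1⟩
      invFun p := ⟨⟨!![p.2.1, p.1.1; p.1.2, t - p.2.1], by
        rw [Matrix.det_fin_two_of]
        linear_combination -p.2.2⟩, by simp [Matrix.trace_fin_two]⟩
      left_inv g := by
        have h2 := g.2
        rw [Matrix.trace_fin_two] at h2
        refine Subtype.ext (Subtype.ext ?_)
        ext i j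
        fin_cases i <;> fin_cases j <;> simp [← h2]
      right_inv _ := rfl }
  have hsum (y : F) : ∑ z : F, (quadraticChar F (t ^ 2 - 4 * (1 + y * z)) : ℤ) =
      if y = 0 then Fintype.card F * quadraticChar F (t ^ 2 - 4) else 0 := by
    split_ifs with hy
    · simp [hy]
    · rw [← sum_quadraticChar_affine hF (mul_ne_zero (neg_ne_zero.2 h4) hy) (t ^ 2 - 4)]
      exact Finset.sum_congr rfl fun z _ => by ring_nf
  rw [Nat.card_congr e, Nat.card_sigma]
  simp only [Nat.card_eq_fintype_card, Fintype.card_subtype, Nat.cast_sum,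
    card_filter_monic_quadratic hF]
  rw [Fintype.sum_prod_type]
  simp only [Finset.sum_add_distrib, hsum]
  simp
  ring

theorem card_filter_sq_sub_four (hF : ringChar F ≠ 2) :
    (({t | t ^ 2 - 4 = 0} : Finset F).card : ℤ) = 2 := by
  have h2 : (2 : F) ≠ 0 := Ring.two_ne_zero hF
  have := card_filter_sq_eq hF (2 ^ 2)
  rw [quadraticChar_sq_one' h2] at this
  rw [show (2 : ℤ) = 1 + 1 by norm_num, ← this]
  simp only [sub_eq_zero, show (4 : F) = 2 ^ 2 by norm_num]

theorem sum_quadraticChar_sq_sub_four (hF : ringChar F ≠ 2) :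
    ∑ t : F, quadraticChar F (t ^ 2 - 4) = -1 := by
  have h2 : (2 : F) ≠ 0 := Ring.two_ne_zero hF
  have h4 : (-4 : F) ≠ 0 := by
    rw [show (-4 : F) = -(2 * 2) by norm_num]; exact neg_ne_zero.2 (mul_ne_zero h2 h2)
  have := sum_quadraticChar_mul_sq_add hF 1 h4
  simpa [sub_eq_add_neg] using this

theorem sum_comp_trace [Fintype (Matrix.SpecialLinearGroup (Fin 2) F)] (hF : ringChar F ≠ 2)
    (f : F → ℤ) :
    ∑ g : Matrix.SpecialLinearGroup (Fin 2) F, f g.1.trace =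
      ∑ t : F, Fintype.card F * (Fintype.card F + quadraticChar F (t ^ 2 - 4)) * f t := by
  rw [← Finset.sum_fiberwise' Finset.univ
    (fun g : Matrix.SpecialLinearGroup (Fin 2) F => g.1.trace) f]
  refine Finset.sum_congr rfl fun t _ => ?_
  rw [Finset.sum_const, nsmul_eq_mul, ← card_trace_eq hF, Nat.card_eq_fintype_card,
    Fintype.card_subtype]

theorem card_specialLinearGroup_two (hF : ringChar F ≠ 2) :
    (Nat.card (Matrix.SpecialLinearGroup (Fin 2) F) : ℤ) =
      (Fintype.card F : ℤ) ^ 3 - Fintype.card F := by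
  have h := sum_comp_trace hF fun _ => 1
  simp only [mul_one, ← Finset.mul_sum, Finset.sum_add_distrib,
    sum_quadraticChar_sq_sub_four hF] at h
  rw [Nat.card_eq_fintype_card]
  simp at h
  rw [h]
  ring

theorem card_center_specialLinearGroup_two (hF : ringChar F ≠ 2) :
    Nat.card (Subgroup.center (Matrix.SpecialLinearGroup (Fin 2) F)) = 2 := by
  have h := card_filter_sq_eq hF (1 : F)
  rw [map_one] at h
  have e : {r : F // r ^ 2 = 1} ≃ Subgroup.center (Matrix.SpecialLinearGroup (Fin 2) F) :=
    Equiv.ofBijective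
      (fun r => ⟨⟨Matrix.scalar (Fin 2) r.1, by simp [r.2]⟩,
        Matrix.SpecialLinearGroup.mem_center_iff.2 ⟨r.1, by simpa using r.2, rfl⟩⟩)
      ⟨fun r s hrs => Subtype.ext (Matrix.scalar_inj.1 (congrArg (fun z => z.1.1) hrs)),
        fun g => by
          obtain ⟨r, hr, h⟩ := Matrix.SpecialLinearGroup.mem_center_iff.1 g.2
          exact ⟨⟨r, by simpa using hr⟩, Subtype.ext (Subtype.ext h)⟩⟩
  rw [← Nat.card_congr e, Nat.card_eq_fintype_card, Fintype.card_subtype]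
  exact_mod_cast h

theorem card_centralizer_specialLinearGroup_two (hF : ringChar F ≠ 2)
    (g : Matrix.SpecialLinearGroup (Fin 2) F) [Decidable (g ∈ Subgroup.center _)] :
    (Nat.card {h // Commute g h} : ℤ) =
      if g ∈ Subgroup.center (Matrix.SpecialLinearGroup (Fin 2) F) then
        (Nat.card (Matrix.SpecialLinearGroup (Fin 2) F) : ℤ)
      else Fintype.card F - quadraticChar F (g.1.trace ^ 2 - 4) +
        if g.1.trace ^ 2 - 4 = 0 then (Fintype.card F : ℤ) else 0 := by
  split_ifs with hg
  · exact_mod_cast Nat.card_congr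
      (Equiv.subtypeUnivEquiv fun x => (Subgroup.mem_center_iff.1 hg x).symm)
  · rw [card_centralizer_eq_card_conic hg, card_conic hF, if_pos ‹_›]
  · rw [card_centralizer_eq_card_conic hg, card_conic hF, if_neg ‹_›]

theorem sum_card_centralizer_pow (hF : ringChar F ≠ 2) (k : ℕ)
    [Fintype (Matrix.SpecialLinearGroup (Fin 2) F)] :
    ∑ g : Matrix.SpecialLinearGroup (Fin 2) F, (Nat.card {h // Commute g h} : ℤ) ^ k =
      ∑ t : F, Fintype.card F * (Fintype.card F + quadraticChar F (t ^ 2 - 4)) *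
        (Fintype.card F - quadraticChar F (t ^ 2 - 4) +
          if t ^ 2 - 4 = 0 then (Fintype.card F : ℤ) else 0) ^ k +
      2 * (((Fintype.card F : ℤ) ^ 3 - Fintype.card F) ^ k - (2 * Fintype.card F) ^ k) := by
  classical
  have hterm (g : Matrix.SpecialLinearGroup (Fin 2) F) : (Nat.card {h // Commute g h} : ℤ) ^ k =
      (Fintype.card F - quadraticChar F (g.1.trace ^ 2 - 4) +
        if g.1.trace ^ 2 - 4 = 0 then (Fintype.card F : ℤ) else 0) ^ k +
      if g ∈ Subgroup.center (Matrix.SpecialLinearGroup (Fin 2) F) then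
        ((Fintype.card F : ℤ) ^ 3 - Fintype.card F) ^ k - (2 * Fintype.card F) ^ k else 0 := by
    rw [card_centralizer_specialLinearGroup_two hF]
    by_cases hg : g ∈ Subgroup.center (Matrix.SpecialLinearGroup (Fin 2) F)
    · rw [if_pos hg, if_pos hg, trace_sq_sub_four_of_mem_center hg,
        card_specialLinearGroup_two hF]
      simp
      ring
    · rw [if_neg hg, if_neg hg, add_zero]
  rw [Finset.sum_congr rfl fun g _ => hterm g, Finset.sum_add_distrib,
    sum_comp_trace hF fun t => (Fintype.card F - quadraticChar F (t ^ 2 - 4) +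
        if t ^ 2 - 4 = 0 then (Fintype.card F : ℤ) else 0) ^ k, Finset.sum_ite]
  simp only [Finset.sum_const, nsmul_eq_mul, mul_zero, add_zero]
  rw [← Fintype.card_subtype, ← Nat.card_eq_fintype_card (α := {g // g ∈ Subgroup.center _}),
    card_center_specialLinearGroup_two hF]
  rfl

theorem sum_linear_quadraticChar_sq_sub_four (hF : ringChar F ≠ 2) (a b c : ℤ) :
    ∑ t : F, (a + b * quadraticChar F (t ^ 2 - 4) + c * if t ^ 2 - 4 = 0 then 1 else 0) =
      Fintype.card F * a - b + 2 * c := by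
  rw [Finset.sum_add_distrib, Finset.sum_add_distrib, ← Finset.mul_sum, ← Finset.mul_sum,
    sum_quadraticChar_sq_sub_four hF, Finset.sum_boole, card_filter_sq_sub_four hF]
  simp
  ring

theorem sum_card_centralizer (hF : ringChar F ≠ 2) [Fintype (Matrix.SpecialLinearGroup (Fin 2) F)] :
    ∑ g : Matrix.SpecialLinearGroup (Fin 2) F, (Nat.card {h // Commute g h} : ℤ) =
      (Fintype.card F + 4) * ((Fintype.card F : ℤ) ^ 3 - Fintype.card F) := by
  have h := sum_card_centralizer_pow hF 1
  simp only [pow_one] at h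
  set q : ℤ := (Fintype.card F : ℤ)
  rw [h]
  have hL := sum_linear_quadraticChar_sq_sub_four hF (q ^ 3 - q) 0 (q + q ^ 3)
  rw [Finset.sum_congr rfl (g := fun t : F => (q ^ 3 - q) + 0 * quadraticChar F (t ^ 2 - 4) +
    (q + q ^ 3) * if t ^ 2 - 4 = 0 then 1 else 0), hL]
  · ring
  · intro t _
    split_ifs with ht
    · rw [ht, MulChar.map_zero]; ring
    · linear_combination -q * quadraticChar_sq_one ht

theorem sum_card_centralizer_sq (hF : ringChar F ≠ 2)
    [Fintype (Matrix.SpecialLinearGroup (Fin 2) F)] :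
    ∑ g : Matrix.SpecialLinearGroup (Fin 2) F, (Nat.card {h // Commute g h} : ℤ) ^ 2 =
      ((Fintype.card F : ℤ) ^ 3 - Fintype.card F) *
        (2 * ((Fintype.card F : ℤ) ^ 3 - Fintype.card F) +
          (Fintype.card F : ℤ) ^ 2 + 6 * Fintype.card F + 1) := by
  rw [sum_card_centralizer_pow hF 2]
  set q : ℤ := (Fintype.card F : ℤ)
  have hL := sum_linear_quadraticChar_sq_sub_four hF (q * (q ^ 3 - q)) (-(q ^ 3 - q))
    (q * (3 * q ^ 3 + q))
  rw [Finset.sum_congr rfl (g := fun t : F => (q * (q ^ 3 - q)) +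
    -(q ^ 3 - q) * quadraticChar F (t ^ 2 - 4) +
    (q * (3 * q ^ 3 + q)) * if t ^ 2 - 4 = 0 then 1 else 0), hL]
  · ring
  · intro t _
    split_ifs with ht
    · rw [ht, MulChar.map_zero]; ring
    · linear_combination -q * (q - quadraticChar F (t ^ 2 - 4)) * quadraticChar_sq_one ht

end SpecialLinear

/-- For `q` odd, `c_s(2,1,q) = q + 4` and `c_s(2,2,q) = q^2 + 8q + 9`: the number of
simultaneous conjugacy classes of pairs of commuting elements of `SL_2(F_q)`
equals `q^2 + 8q + 9`. -/
theorem stmt_15 (q : ℕ) (hq : IsPrimePow q) (hodd : Odd q)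
    (F : Type*) [Field F] [Fintype F] (hF : Fintype.card F = q) :
    commClassCount (Matrix.SpecialLinearGroup (Fin 2) F) 1 = q + 4 ∧
    commClassCount (Matrix.SpecialLinearGroup (Fin 2) F) 2 = q ^ 2 + 8 * q + 9 := by
  classical
  have hchar : ringChar F ≠ 2 := by
    rw [Ne, FiniteField.even_card_iff_char_two, hF]
    have := Nat.odd_iff.1 hodd
    omega
  have hq1 : (1 : ℤ) < q := by exact_mod_cast hq.one_lt
  have hne : ((q : ℤ) ^ 3 - q) ≠ 0 := by
    have : (0 : ℤ) < q * (q - 1) * (q + 1) := by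
      have : (0 : ℤ) < q - 1 := by linarith
      positivity
    intro h
    linarith [show (q : ℤ) * (q - 1) * (q + 1) = q ^ 3 - q by ring]
  have hG := card_specialLinearGroup_two hchar
  have h1 := commClassCount_one_mul_card (G := Matrix.SpecialLinearGroup (Fin 2) F)
  have h2 := commClassCount_two_mul_card (G := Matrix.SpecialLinearGroup (Fin 2) F)
    fun g x y => commute_of_commute_notMem_center
  zify at h1
  rw [h1, sum_card_centralizer hchar, sum_card_centralizer_sq hchar,
    card_center_specialLinearGroup_two hchar, hG, hF] at h2
  rw [sum_card_centralizer hchar, hG, hF] at h1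
  constructor
  · zify
    exact mul_right_cancel₀ hne h1
  · zify
    refine mul_right_cancel₀ hne (h2.trans ?_)
    push_cast
    ring
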